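/- Let β > 1, L > 0, d ≥ 1, and ℓ = ⌊β⌋ ≥ 1. There exists a constant c > 0 depending only on β, d, and L such that the following holds. Let m be a positive integer and set h = 1/m. For j ∈ {0, …, m−1}^d let P_ℓ^j = {h·(x + j) : x ∈ P_ℓ} denote the rescaled and shifted copy of the ℓ-th principal lattice in the sub-cube I_j = [0,h]^d + h·j. If f, g ∈ H(β, L) satisfy |f(U) − g(U)| ≤ h^β for every point U ∈ P_ℓ^j and every j ∈ {0, …, m−1}^d, then sup_{x ∈ [0,1]^d} |f(x) − g(x)| ≤ c · h^β. -/

import Mathlib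

open MeasureTheory Finset
open scoped ENNReal

noncomputable section

/-- The largest integer strictly less than `β` (for `β > 0`). -/
def lflr (β : ℝ) : ℕ := ⌈β⌉₊ - 1

/-- The Euclidean (`ℓ²`) norm on `Fin d → ℝ`. -/
noncomputable def l2norm {d : ℕ} (x : Fin d → ℝ) : ℝ := Real.sqrt (∑ i, x i ^ 2)

/-- Partial derivative in coordinate `i`. -/
noncomputable def pder {d : ℕ} (i : Fin d) (f : (Fin d → ℝ) → ℝ) : (Fin d → ℝ) → ℝ :=
  fun x => fderiv ℝ f x (Pi.single i 1)

/-- The multi-index partial differential operator `D^s`. -/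
noncomputable def mderiv {d : ℕ} (s : Fin d → ℕ) (f : (Fin d → ℝ) → ℝ) : (Fin d → ℝ) → ℝ :=
  (List.finRange d).foldr (fun i g => (pder i)^[s i] g) f

/-- The Hölder class `H(β, L)`: functions supported on the unit cube, `⌊β⌋` times
differentiable, whose top-order partial derivatives are `(β - ⌊β⌋)`-Hölder with
constant `L` (w.r.t. the Euclidean norm). -/
def HolderClass (d : ℕ) (β L : ℝ) (f : (Fin d → ℝ) → ℝ) : Prop :=
  (∀ x, x ∉ Set.Icc (0 : Fin d → ℝ) 1 → f x = 0) ∧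
  ContDiff ℝ (lflr β : ℕ) f ∧
  ∀ s : Fin d → ℕ, (∑ i, s i) = lflr β → ∀ x y : Fin d → ℝ,
    |mderiv s f x - mderiv s f y| ≤ L * l2norm (x - y) ^ (β - (lflr β : ℝ))

/-- Barycentric coordinates with respect to the simplex `Δ_d` with vertices
`0, e_1, …, e_d`. -/
def lam {d : ℕ} (t : Fin (d + 1)) (x : Fin d → ℝ) : ℝ :=
  if h : t = 0 then 1 - ∑ i, x i else x (t.pred h)

/-- The `ℓ`-th principal lattice of the simplex `Δ_d`: points of the simplex all of
whose barycentric coordinates are nonnegative integer multiples of `1/ℓ`. -/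
def principalLattice (d ℓ : ℕ) : Set (Fin d → ℝ) :=
  {x | ∀ t : Fin (d + 1), 0 ≤ lam t x ∧ ∃ r : ℕ, (ℓ : ℝ) * lam t x = r}

/-- The Lagrange basis polynomial `p` associated with a point `u` of the `ℓ`-th
principal lattice:  `p(x) = ∏_{t : λ_t(u) > 0} ∏_{r=0}^{ℓλ_t(u)-1}
(λ_t(x) - r/ℓ)/(λ_t(u) - r/ℓ)`. -/
noncomputable def lagBasis (d ℓ : ℕ) (u x : Fin d → ℝ) : ℝ :=
  ∏ t : Fin (d + 1), ∏ r ∈ Finset.range ⌊(ℓ : ℝ) * lam t u⌋₊,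
    (lam t x - r / ℓ) / (lam t u - r / ℓ)

end

/-!
On a sub-cube of side `h`, the difference `φ = f - g` is its Taylor polynomial `T` of degree `ℓ` at
the corner up to an error `O(h ^ β)`, because the `ℓ`-th derivative of `φ` is Hölder of exponent
`β - ℓ`. Hence `T` is also `O(h ^ β)` on the rescaled principal lattice. As that lattice is
unisolvent for polynomials of degree at most `ℓ`, Lagrange interpolation recovers `T` on the whole
sub-cube from these values, with a Lebesgue constant that is invariant under scaling and so
independent of `h`. Therefore `T`, and with it `φ`, is `O(h ^ β)` on the sub-cube.

The interpolation formula comes from the tensor product of the univariate Newton series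
`∑ a, Ring.choose t a * Δ ^ a p 0`: on a monomial of degree at most `ℓ`, the terms of order greater
than `ℓ` vanish, and the remaining finite differences only involve the lattice.
-/

open scoped Nat NNReal

section Newton

variable {K : Type*} [Field K] [CharZero K]

theorem ringChoose_eq_inv_factorial_mul_eval (t : K) (a : ℕ) :
    Ring.choose t a = (a ! : K)⁻¹ * (descPochhammer K a).eval t := by
  rw [Ring.choose_eq_smul, smul_eq_mul, ← descPochhammer_map (Int.castRingHom K),
    Polynomial.eval_map, ← Polynomial.eval₂_smulOneHom_eq_smeval]
  congr 2
  exact Subsingleton.elim _ _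

theorem continuous_ringChoose (a : ℕ) : Continuous fun t : ℝ => Ring.choose t a := by
  simp only [ringChoose_eq_inv_factorial_mul_eval]
  fun_prop

theorem eval_eq_sum_ringChoose_mul_fwdDiff_iter {p : Polynomial K} {n : ℕ}
    (hp : p.natDegree ≤ n) (t : K) :
    p.eval t = ∑ a ∈ range (n + 1), Ring.choose t a * (fwdDiff 1)^[a] p.eval 0 := by
  let q : Polynomial K := ∑ a ∈ range (n + 1),
    Polynomial.C ((a ! : K)⁻¹ * (fwdDiff 1)^[a] p.eval 0) * descPochhammer K a
  have eval_q (s : K) :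
      q.eval s = ∑ a ∈ range (n + 1), Ring.choose s a * (fwdDiff 1)^[a] p.eval 0 := by
    simp only [q, Polynomial.eval_finsetSum, Polynomial.eval_mul, Polynomial.eval_C,
      ringChoose_eq_inv_factorial_mul_eval]
    exact sum_congr rfl fun a _ => by ring
  have eval_natCast (N : ℕ) : p.eval (N : K) = q.eval (N : K) := by
    have gregory_newton := shift_eq_sum_fwdDiff_iter (1 : K) p.eval N 0
    rw [zero_add, nsmul_one] at gregory_newton
    rw [gregory_newton, eval_q]
    refine sum_congr_of_eq_on_inter (fun a _ ha => ?_) (fun a _ ha => ?_) fun a _ _ => ?_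
    · rw [Polynomial.fwdDiff_iter_eq_zero_of_degree_lt (by grind), Pi.zero_apply, smul_zero]
    · rw [Ring.choose_natCast, Nat.choose_eq_zero_of_lt (by grind), Nat.cast_zero, zero_mul]
    · rw [Ring.choose_natCast, nsmul_eq_mul]
  have p_eq_q : p = q := Polynomial.eq_of_infinite_eval_eq p q <|
    (Set.infinite_range_of_injective (Nat.cast_injective (R := K))).mono <| by
      rintro _ ⟨N, rfl⟩
      exact eval_natCast N
  rw [← eval_q, ← p_eq_q]

end Newton

section LatticeInterpolation

variable {ι : Type*} [Fintype ι] [DecidableEq ι]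

/-- The multi-indices of order at most `n`. They index both the principal lattice (`κ` stands for
the node `κ / n`, which for `n = 0` is `0 / 0 = 0`) and the Newton basis
`∏ i, Ring.choose (z i) (α i)` of the polynomials of total degree at most `n`. -/
def multiIndicesLE (ι : Type*) [Fintype ι] [DecidableEq ι] (n : ℕ) : Finset (ι → ℕ) :=
  {α ∈ Fintype.piFinset fun _ => range (n + 1) | ∑ i, α i ≤ n}

theorem mem_multiIndicesLE {n : ℕ} {α : ι → ℕ} : α ∈ multiIndicesLE ι n ↔ ∑ i, α i ≤ n := by
  simp only [multiIndicesLE, mem_filter, Fintype.mem_piFinset, mem_range, Nat.lt_succ_iff,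
    and_iff_right_iff_imp]
  exact fun h i => (single_le_sum (fun _ _ => Nat.zero_le _) (mem_univ i)).trans h

theorem exists_lt_of_notMem_multiIndicesLE {n : ℕ} {s α : ι → ℕ} (hs : s ∈ multiIndicesLE ι n)
    (hα : α ∉ multiIndicesLE ι n) : ∃ i, s i < α i := by
  rw [mem_multiIndicesLE] at hs hα
  obtain ⟨i, -, hi⟩ := exists_lt_of_sum_lt (hs.trans_lt (not_le.1 hα))
  exact ⟨i, hi⟩

theorem prod_fwdDiff_iter_eq_sum {R : Type*} [CommRing R] {n : ℕ} {α : ι → ℕ}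
    (hα : α ∈ multiIndicesLE ι n) (f : ι → R → R) :
    ∏ i, (fwdDiff 1)^[α i] (f i) 0 =
      ∑ κ ∈ multiIndicesLE ι n,
        (∏ i, (-1 : R) ^ (α i - κ i) * (α i).choose (κ i)) * ∏ i, f i (κ i) := by
  have fwdDiff_eq (i : ι) : (fwdDiff 1)^[α i] (f i) 0 =
      ∑ k ∈ range (α i + 1), (-1 : R) ^ (α i - k) * (α i).choose k * f i k := by
    rw [fwdDiff_iter_eq_sum_shift]
    exact sum_congr rfl fun k _ => by simp
  simp only [fwdDiff_eq, prod_univ_sum, prod_mul_distrib]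
  refine sum_subset (fun κ hκ => ?_) fun κ _ hκ => ?_
  · rw [mem_multiIndicesLE] at hα ⊢
    exact (sum_le_sum fun i _ => mem_range_succ_iff.1 (Fintype.mem_piFinset.1 hκ i)).trans hα
  · obtain ⟨i, hi⟩ : ∃ i, α i < κ i := by simpa [Nat.lt_succ_iff] using hκ
    have choose_eq_zero : ∏ i, ((α i).choose (κ i) : R) = 0 :=
      prod_eq_zero (mem_univ i) (by rw [Nat.choose_eq_zero_of_lt hi, Nat.cast_zero])
    rw [choose_eq_zero, mul_zero, zero_mul]

variable {K : Type*} [Field K] [CharZero K]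

theorem prod_pow_eq_sum_ringChoose_mul_fwdDiff_iter {n : ℕ} {s : ι → ℕ} (hs : ∑ i, s i ≤ n)
    (z : ι → K) :
    ∏ i, z i ^ s i = ∑ α ∈ multiIndicesLE ι n,
      (∏ i, Ring.choose (z i) (α i)) * ∏ i, (fwdDiff 1)^[α i] (fun t : K => t ^ s i) 0 := by
  have newton (i : ι) : z i ^ s i =
      ∑ a ∈ range (n + 1), Ring.choose (z i) a * (fwdDiff 1)^[a] (fun t : K => t ^ s i) 0 := by
    have natDegree_le : (Polynomial.X ^ s i : Polynomial K).natDegree ≤ n :=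
      (Polynomial.natDegree_X_pow_le _).trans
        ((single_le_sum (fun _ _ => Nat.zero_le _) (mem_univ i)).trans hs)
    simpa using eval_eq_sum_ringChoose_mul_fwdDiff_iter natDegree_le (z i)
  simp only [newton, prod_univ_sum, ← prod_mul_distrib]
  refine (sum_subset (filter_subset _ _) fun α _ hα => ?_).symm
  obtain ⟨i, hi⟩ := exists_lt_of_notMem_multiIndicesLE (mem_multiIndicesLE.2 hs) hα
  refine prod_eq_zero (mem_univ i) ?_
  rw [fwdDiff_iter_pow_eq_zero_of_lt hi, Pi.zero_apply, mul_zero]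

/-- The Lagrange basis polynomial of the node `κ` for interpolation at the integer points
`multiIndicesLE ι n`, written in the Newton basis. -/
noncomputable def latticeLagrange (n : ℕ) (κ : ι → ℕ) (z : ι → K) : K :=
  ∑ α ∈ multiIndicesLE ι n,
    (∏ i, Ring.choose (z i) (α i)) * ∏ i, (-1 : K) ^ (α i - κ i) * (α i).choose (κ i)

theorem eval_eq_sum_latticeLagrange {n : ℕ} {p : MvPolynomial ι K} (hp : p.totalDegree ≤ n)
    (z : ι → K) :
    p.eval z = ∑ κ ∈ multiIndicesLE ι n, latticeLagrange n κ z * p.eval fun i => (κ i : K) := by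
  have prod_pow_eq {s : ι → ℕ} (hs : ∑ i, s i ≤ n) : ∏ i, z i ^ s i =
      ∑ κ ∈ multiIndicesLE ι n, latticeLagrange n κ z * ∏ i, (κ i : K) ^ s i := by
    rw [prod_pow_eq_sum_ringChoose_mul_fwdDiff_iter hs]
    simp only [latticeLagrange, sum_mul]
    rw [sum_comm]
    refine sum_congr rfl fun α hα => ?_
    rw [prod_fwdDiff_iter_eq_sum hα, mul_sum]
    exact sum_congr rfl fun κ _ => (mul_assoc _ _ _).symm
  simp only [MvPolynomial.eval_eq', mul_sum]
  rw [sum_comm]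
  refine sum_congr rfl fun s hs => ?_
  have sum_le : ∑ i, s i ≤ n := by
    rw [← Finsupp.sum_fintype s (fun _ e => e) fun _ => rfl]
    exact (MvPolynomial.le_totalDegree hs).trans hp
  rw [prod_pow_eq sum_le, mul_sum]
  exact sum_congr rfl fun κ _ => mul_left_comm _ _ _

theorem multilinear_apply_eq_sum_single {R V : Type*} [CommSemiring R] [AddCommMonoid V]
    [Module R V] {k : ℕ} (A : MultilinearMap R (fun _ : Fin k => ι → R) V)
    (v : Fin k → ι → R) :
    A v = ∑ q : Fin k → ι, (∏ j, v j (q j)) • A fun j => Pi.single (q j) 1 := by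
  have v_eq (j : Fin k) : v j = ∑ i, v j i • Pi.single i 1 := pi_eq_sum_univ' (v j)
  conv_lhs => rw [funext v_eq, A.map_sum]
  exact sum_congr rfl fun q _ => A.map_smul_univ _ _

theorem multilinear_diag_eq_sum_latticeLagrange_smul {V : Type*} [AddCommGroup V] [Module K V]
    {k n : ℕ} (hk : k ≤ n) (A : MultilinearMap K (fun _ : Fin k => ι → K) V) (z : ι → K) :
    (A fun _ => z) = ∑ κ ∈ multiIndicesLE ι n,
      latticeLagrange n κ z • A fun _ i => (κ i : K) := by
  have prod_eq (q : Fin k → ι) : ∏ j, z (q j) =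
      ∑ κ ∈ multiIndicesLE ι n, latticeLagrange n κ z * ∏ j, (κ (q j) : K) := by
    have totalDegree_le : (∏ j, MvPolynomial.X (q j) : MvPolynomial ι K).totalDegree ≤ n :=
      (MvPolynomial.totalDegree_finsetProd _ _).trans (by simpa using hk)
    simpa only [map_prod, MvPolynomial.eval_X] using eval_eq_sum_latticeLagrange totalDegree_le z
  have expand (w : ι → K) := multilinear_apply_eq_sum_single A fun _ => w
  simp_rw [expand z, prod_eq, sum_smul, mul_smul]
  rw [sum_comm]
  exact sum_congr rfl fun κ _ => by rw [← smul_sum, expand fun i => (κ i : K)]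

theorem multilinear_diag_eq_sum_latticeLagrange_smul_div {V : Type*} [AddCommGroup V]
    [Module K V] {k n : ℕ} (hk : k ≤ n) (A : MultilinearMap K (fun _ : Fin k => ι → K) V)
    (u : ι → K) :
    (A fun _ => u) = ∑ κ ∈ multiIndicesLE ι n,
      latticeLagrange n κ ((n : K) • u) • A fun _ i => (κ i : K) / n := by
  have map_smul (c : K) (w : ι → K) : (A fun _ => c • w) = c ^ k • A fun _ => w := by
    simpa using A.map_smul_univ (fun _ => c) fun _ => w
  have map_node (κ : ι → ℕ) :
      (A fun _ i => (κ i : K) / n) = (n : K)⁻¹ ^ k • A fun _ i => (κ i : K) := by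
    rw [← map_smul]
    exact congrArg A (funext fun _ => funext fun i => div_eq_inv_mul _ _)
  have pow_ne_zero : (n : K) ^ k ≠ 0 := by
    rcases eq_or_ne n 0 with rfl | hn
    · obtain rfl : k = 0 := Nat.le_zero.1 hk
      exact pow_zero (_ : K) ▸ one_ne_zero
    · exact pow_ne_zero k (Nat.cast_ne_zero.2 hn)
  have interpolation := multilinear_diag_eq_sum_latticeLagrange_smul hk A ((n : K) • u)
  rw [map_smul, ← eq_inv_smul_iff₀ pow_ne_zero, ← inv_pow] at interpolation
  simp_rw [interpolation, smul_sum, map_node, smul_comm ((n : K)⁻¹ ^ k)]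

end LatticeInterpolation

section LebesgueConstant

variable (ι : Type*) [Fintype ι] [DecidableEq ι] (ℓ : ℕ)

/-- The Lebesgue constant of interpolation at the nodes `κ / ℓ`, taken over the whole unit cube and
not only over the simplex that these nodes span. -/
noncomputable def latticeLebesgueConst : ℝ :=
  sSup ((fun u : ι → ℝ => ∑ κ ∈ multiIndicesLE ι ℓ, |latticeLagrange ℓ κ ((ℓ : ℝ) • u)|) ''
    Set.Icc 0 1)

variable {ι ℓ}

theorem continuous_latticeLagrange (κ : ι → ℕ) :
    Continuous (latticeLagrange ℓ κ : (ι → ℝ) → ℝ) :=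
  continuous_finsetSum _ fun α _ => .mul
    (continuous_finsetProd _ fun i _ => (continuous_ringChoose (α i)).comp (continuous_apply i))
    continuous_const

theorem sum_abs_latticeLagrange_le {u : ι → ℝ} (hu : u ∈ Set.Icc 0 1) :
    ∑ κ ∈ multiIndicesLE ι ℓ, |latticeLagrange ℓ κ ((ℓ : ℝ) • u)| ≤ latticeLebesgueConst ι ℓ := by
  refine le_csSup (isCompact_Icc.image ?_).bddAbove (Set.mem_image_of_mem _ hu)
  exact continuous_finsetSum _ fun κ _ =>
    ((continuous_latticeLagrange κ).comp (continuous_const_smul _)).abs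

theorem latticeLebesgueConst_nonneg : 0 ≤ latticeLebesgueConst ι ℓ :=
  (sum_nonneg fun _ _ => abs_nonneg _).trans
    (sum_abs_latticeLagrange_le (Set.left_mem_Icc.2 zero_le_one))

end LebesgueConstant

section PrincipalLattice

variable {d ℓ : ℕ}

theorem principalLattice_subset_Icc : principalLattice d ℓ ⊆ Set.Icc 0 1 := by
  intro x hx
  have coord_nonneg (i : Fin d) : 0 ≤ x i := by simpa [lam] using (hx i.succ).1
  have sum_le_one : ∑ i, x i ≤ 1 := by simpa [lam] using (hx 0).1
  exact ⟨coord_nonneg, fun i =>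
    (single_le_sum (fun i _ => coord_nonneg i) (mem_univ i)).trans sum_le_one⟩

theorem div_mem_principalLattice {κ : Fin d → ℕ} (hκ : κ ∈ multiIndicesLE (Fin d) ℓ) :
    (fun i => (κ i : ℝ) / ℓ) ∈ principalLattice d ℓ := by
  rw [mem_multiIndicesLE] at hκ
  have sum_eq : ∑ i, (κ i : ℝ) / ℓ = (∑ i, κ i : ℕ) / ℓ := by rw [← sum_div, Nat.cast_sum]
  intro t
  refine t.cases ?_ fun i => ?_
  · simp only [lam, dif_pos, sum_eq, sub_nonneg]
    refine ⟨div_le_one_of_le₀ (mod_cast hκ) ℓ.cast_nonneg, ℓ - ∑ i, κ i, ?_⟩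
    rw [mul_sub, mul_one, mul_div_cancel_of_imp' fun h => by simp_all, Nat.cast_sub hκ]
  · have κ_eq_zero (h : (ℓ : ℝ) = 0) : (κ i : ℝ) = 0 := by
      have := (single_le_sum (fun _ _ => Nat.zero_le _) (mem_univ i)).trans hκ
      simp_all
    simp only [lam, Fin.succ_ne_zero, dif_neg, not_false_eq_true, Fin.pred_succ]
    exact ⟨by positivity, κ i, mul_div_cancel_of_imp' κ_eq_zero⟩

end PrincipalLattice

section Taylor

variable {E F : Type*} [NormedAddCommGroup E] [NormedSpace ℝ E] [NormedAddCommGroup F]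
  [NormedSpace ℝ F] {f : E → F} {n : ℕ}

/-- The `n`-th Taylor polynomial of `f` at `x`, as a function of the increment `v`. -/
noncomputable def taylorSum (f : E → F) (n : ℕ) (x v : E) : F :=
  ∑ k ∈ range (n + 1), (k ! : ℝ)⁻¹ • iteratedFDeriv ℝ k f x fun _ => v

theorem map_add_sub_taylorSum_eq_integral [CompleteSpace F] (hf : ContDiff ℝ (n + 1) f)
    (x v : E) :
    f (x + v) - taylorSum f (n + 1) x v = (n ! : ℝ)⁻¹ • ∫ t in (0 : ℝ)..1, (1 - t) ^ n •
      (iteratedFDeriv ℝ (n + 1) f (x + t • v) - iteratedFDeriv ℝ (n + 1) f x) fun _ => v := by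
  have integral_one_sub_pow : ∫ t in (0 : ℝ)..1, (1 - t) ^ n = ((n : ℝ) + 1)⁻¹ := by
    rw [intervalIntegral.integral_comp_sub_left fun t : ℝ => t ^ n]
    simp
  have continuous_deriv :
      Continuous fun t : ℝ => iteratedFDeriv ℝ (n + 1) f (x + t • v) fun _ => v :=
    (ContinuousMultilinearMap.apply ℝ (fun _ : Fin (n + 1) => E) F fun _ => v).continuous.comp <|
      (hf.continuous_iteratedFDeriv le_rfl).comp <| by fun_prop
  have intervalIntegrable_smul {g : ℝ → F} (hg : Continuous g) :
      IntervalIntegrable (fun t => (1 - t) ^ n • g t) volume 0 1 :=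
    Continuous.intervalIntegrable (by fun_prop) _ _
  simp only [sub_apply, smul_sub]
  rw [intervalIntegral.integral_sub (intervalIntegrable_smul continuous_deriv)
      (intervalIntegrable_smul continuous_const),
    intervalIntegral.integral_smul_const, integral_one_sub_pow, smul_sub, smul_smul,
    map_add_eq_sum_add_integral_iteratedFDeriv fun _ _ => hf.contDiffAt, taylorSum,
    sum_range_succ _ (n + 1), Nat.factorial_succ]
  push_cast
  rw [mul_inv_rev]
  abel

theorem norm_iteratedFDeriv_sub_apply_le {C r : ℝ≥0}
    (hC : HolderWith C r (iteratedFDeriv ℝ n f)) (x v : E) {t : ℝ} (ht : t ∈ Set.Icc 0 1) :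
    ‖(iteratedFDeriv ℝ n f (x + t • v) - iteratedFDeriv ℝ n f x) fun _ => v‖ ≤
      C * ‖v‖ ^ (n + r : ℝ) := by
  have norm_smul_le : ‖t • v‖ ≤ ‖v‖ := by
    rw [norm_smul, Real.norm_of_nonneg ht.1]
    exact mul_le_of_le_one_left (norm_nonneg v) ht.2
  have dist_le := hC.dist_le (x + t • v) x
  rw [dist_eq_norm, dist_eq_norm, add_sub_cancel_left] at dist_le
  calc _ ≤ ‖iteratedFDeriv ℝ n f (x + t • v) - iteratedFDeriv ℝ n f x‖ * ‖v‖ ^ n := by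
        simpa using ContinuousMultilinearMap.le_opNorm
          (iteratedFDeriv ℝ n f (x + t • v) - iteratedFDeriv ℝ n f x) fun _ => v
    _ ≤ C * ‖v‖ ^ (r : ℝ) * ‖v‖ ^ n := by
        gcongr
        exact dist_le.trans (by gcongr)
    _ = C * ‖v‖ ^ (n + r : ℝ) := by
        rw [Real.rpow_add_of_nonneg (norm_nonneg v) n.cast_nonneg r.coe_nonneg,
          Real.rpow_natCast]
        ring

theorem norm_map_add_sub_taylorSum_le [CompleteSpace F] {C r : ℝ≥0} (hf : ContDiff ℝ n f)
    (hC : HolderWith C r (iteratedFDeriv ℝ n f)) (x v : E) :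
    ‖f (x + v) - taylorSum f n x v‖ ≤ C * ‖v‖ ^ (n + r : ℝ) := by
  have deriv_le {t : ℝ} (ht : t ∈ Set.Icc 0 1) := norm_iteratedFDeriv_sub_apply_le hC x v ht
  cases n with
  | zero => simpa [taylorSum] using deriv_le (Set.right_mem_Icc.2 zero_le_one)
  | succ n =>
    set integrand : ℝ → F := fun t => (1 - t) ^ n •
      (iteratedFDeriv ℝ (n + 1) f (x + t • v) - iteratedFDeriv ℝ (n + 1) f x) fun _ => v
      with integrand_eq
    have integrand_le {t : ℝ} (ht : t ∈ Set.uIoc 0 1) :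
        ‖integrand t‖ ≤ C * ‖v‖ ^ ((n + 1 : ℕ) + r : ℝ) := by
      rw [Set.uIoc_of_le zero_le_one] at ht
      have weight_le_one : ‖(1 - t) ^ n‖ ≤ 1 := by
        rw [Real.norm_of_nonneg (pow_nonneg (sub_nonneg.2 ht.2) n)]
        exact pow_le_one₀ (sub_nonneg.2 ht.2) (sub_le_self _ ht.1.le)
      rw [integrand_eq, norm_smul]
      exact (mul_le_of_le_one_left (norm_nonneg _) weight_le_one).trans
        (deriv_le (Set.Ioc_subset_Icc_self ht))
    have integral_le : ‖∫ t in (0 : ℝ)..1, integrand t‖ ≤ C * ‖v‖ ^ ((n + 1 : ℕ) + r : ℝ) := by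
      simpa using intervalIntegral.norm_integral_le_of_norm_le_const fun _ => integrand_le
    rw [map_add_sub_taylorSum_eq_integral hf, norm_smul, norm_inv, Real.norm_natCast]
    exact (mul_le_of_le_one_left (norm_nonneg _)
      (inv_le_one_of_one_le₀ (mod_cast n.factorial_pos))).trans integral_le

theorem norm_map_add_smul_sub_taylorSum_le {ι : Type*} [Fintype ι] [CompleteSpace F]
    {f : (ι → ℝ) → F} {C r : ℝ≥0} {h : ℝ} (hf : ContDiff ℝ n f)
    (hC : HolderWith C r (iteratedFDeriv ℝ n f))
    (hh : 0 ≤ h) (x : ι → ℝ) {u : ι → ℝ} (hu : u ∈ Set.Icc 0 1) :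
    ‖f (x + h • u) - taylorSum f n x (h • u)‖ ≤ C * h ^ (n + r : ℝ) := by
  have norm_u_le : ‖u‖ ≤ 1 := (pi_norm_le_iff_of_nonneg zero_le_one).2 fun i =>
    (Real.norm_of_nonneg (hu.1 i)).trans_le (hu.2 i)
  have norm_smul_le : ‖h • u‖ ≤ h := by
    rw [norm_smul, Real.norm_of_nonneg hh]
    exact mul_le_of_le_one_right hh norm_u_le
  exact (norm_map_add_sub_taylorSum_le hf hC x _).trans (by gcongr)

end Taylor

section TaylorInterpolation

variable {ι F : Type*} [Fintype ι] [DecidableEq ι] [NormedAddCommGroup F] [NormedSpace ℝ F]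

theorem taylorSum_smul_eq_sum_latticeLagrange_smul (f : (ι → ℝ) → F) (n : ℕ) (x : ι → ℝ) (h : ℝ)
    (u : ι → ℝ) :
    taylorSum f n x (h • u) = ∑ κ ∈ multiIndicesLE ι n,
      latticeLagrange n κ ((n : ℝ) • u) • taylorSum f n x (h • fun i => (κ i : ℝ) / n) := by
  have map_smul (k : ℕ) (w : ι → ℝ) : (iteratedFDeriv ℝ k f x fun _ => h • w) =
      h ^ k • iteratedFDeriv ℝ k f x fun _ => w := by
    simpa using (iteratedFDeriv ℝ k f x).map_smul_univ (fun _ => h) fun _ => w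
  simp only [taylorSum, map_smul, smul_sum]
  rw [sum_comm]
  refine sum_congr rfl fun k hk => ?_
  have interpolation := multilinear_diag_eq_sum_latticeLagrange_smul_div
    (mem_range_succ_iff.1 hk) (iteratedFDeriv ℝ k f x).toMultilinearMap u
  simp only [ContinuousMultilinearMap.coe_coe] at interpolation
  rw [interpolation, smul_sum, smul_sum]
  refine sum_congr rfl fun κ _ => ?_
  rw [smul_comm (latticeLagrange n κ _), smul_comm (latticeLagrange n κ _)]

theorem norm_taylorSum_smul_le {f : (ι → ℝ) → F} {n : ℕ} {x u : ι → ℝ} {h B : ℝ}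
    (hB : ∀ κ ∈ multiIndicesLE ι n, ‖taylorSum f n x (h • fun i => (κ i : ℝ) / n)‖ ≤ B)
    (hu : u ∈ Set.Icc 0 1) : ‖taylorSum f n x (h • u)‖ ≤ latticeLebesgueConst ι n * B := by
  have B_nonneg : 0 ≤ B := (norm_nonneg _).trans (hB 0 (mem_multiIndicesLE.2 (by simp)))
  rw [taylorSum_smul_eq_sum_latticeLagrange_smul]
  calc _ ≤ ∑ κ ∈ multiIndicesLE ι n, |latticeLagrange n κ ((n : ℝ) • u)| * B :=
        norm_sum_le_of_le _ fun κ hκ => by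
          rw [norm_smul, Real.norm_eq_abs]
          gcongr
          exact hB κ hκ
    _ ≤ latticeLebesgueConst ι n * B := by
        rw [← sum_mul]
        gcongr
        exact sum_abs_latticeLagrange_le hu

theorem norm_le_of_forall_principalLattice [CompleteSpace F] {d ℓ : ℕ} {f : (Fin d → ℝ) → F}
    {C r : ℝ≥0} {h ε : ℝ} (hf : ContDiff ℝ ℓ f) (hC : HolderWith C r (iteratedFDeriv ℝ ℓ f))
    (hh : 0 ≤ h) {x : Fin d → ℝ} (hε : ∀ v ∈ principalLattice d ℓ, ‖f (x + h • v)‖ ≤ ε)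
    {u : Fin d → ℝ} (hu : u ∈ Set.Icc 0 1) :
    ‖f (x + h • u)‖ ≤ latticeLebesgueConst (Fin d) ℓ * ε +
      (latticeLebesgueConst (Fin d) ℓ + 1) * (C * h ^ (ℓ + r : ℝ)) := by
  set R := C * h ^ (ℓ + r : ℝ)
  have remainder_le {v : Fin d → ℝ} (hv : v ∈ Set.Icc 0 1) :
      ‖f (x + h • v) - taylorSum f ℓ x (h • v)‖ ≤ R :=
    norm_map_add_smul_sub_taylorSum_le hf hC hh x hv
  have node_le (κ : Fin d → ℕ) (hκ : κ ∈ multiIndicesLE (Fin d) ℓ) :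
      ‖taylorSum f ℓ x (h • fun i => (κ i : ℝ) / ℓ)‖ ≤ ε + R := by
    have hnode := div_mem_principalLattice hκ
    rw [← sub_sub_cancel (f (x + h • fun i => (κ i : ℝ) / ℓ)) (taylorSum f ℓ x _)]
    exact norm_sub_le_of_le (hε _ hnode) (remainder_le (principalLattice_subset_Icc hnode))
  calc ‖f (x + h • u)‖
      = ‖f (x + h • u) - taylorSum f ℓ x (h • u) + taylorSum f ℓ x (h • u)‖ := by
        rw [sub_add_cancel]
    _ ≤ R + latticeLebesgueConst (Fin d) ℓ * (ε + R) :=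
        norm_add_le_of_le (remainder_le hu) (norm_taylorSum_smul_le node_le hu)
    _ = _ := by ring

end TaylorInterpolation

section PartialDerivatives

variable {d n : ℕ} {f : (Fin d → ℝ) → ℝ}

theorem contDiff_pder {i : Fin d} (hf : ContDiff ℝ (n + 1 : ℕ) f) : ContDiff ℝ n (pder i f) :=
  (hf.fderiv_right (by norm_cast)).clm_apply contDiff_const

theorem contDiff_foldr_pder {l : List (Fin d)} (hf : ContDiff ℝ (n + l.length : ℕ) f) :
    ContDiff ℝ n (l.foldr pder f) := by
  induction l generalizing n with
  | nil => exact hf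
  | cons i l ih => exact contDiff_pder (ih (by rwa [add_assoc, add_comm 1]))

theorem pder_comm (i j : Fin d) (hf : ContDiff ℝ 2 f) :
    pder i (pder j f) = pder j (pder i f) := by
  ext x
  have hessian (i j : Fin d) : pder i (pder j f) x =
      fderiv ℝ (fderiv ℝ f) x (Pi.single i 1) (Pi.single j 1) := by
    have differentiableAt_fderiv : DifferentiableAt ℝ (fderiv ℝ f) x :=
      (hf.fderiv_right (m := 1) one_add_one_eq_two.le).differentiable one_ne_zero x
    unfold pder
    simp [fderiv_clm_apply differentiableAt_fderiv (differentiableAt_const _)]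
  rw [hessian, hessian]
  exact hf.contDiffAt.isSymmSndFDerivAt (by simp) _ _

theorem foldr_pder_eq_of_perm {l l' : List (Fin d)} (h : l.Perm l')
    (hf : ContDiff ℝ l.length f) : l.foldr pder f = l'.foldr pder f := by
  induction h with
  | nil => rfl
  | cons i _ ih => exact congrArg (pder i) (ih (hf.of_le (by simp)))
  | swap i j l =>
    refine pder_comm _ _ (contDiff_foldr_pder (n := 2) ?_)
    rwa [add_comm]
  | trans h _ ih ih' => exact (ih hf).trans (ih' (h.length_eq ▸ hf))

theorem foldr_pder_ofFn (q : Fin n → Fin d) (hf : ContDiff ℝ n f) :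
    (List.ofFn q).foldr pder f =
      fun x => iteratedFDeriv ℝ n f x fun j => Pi.single (q j) 1 := by
  induction n with
  | zero => simp
  | succ n ih =>
    ext x
    have differentiableAt_iteratedFDeriv : DifferentiableAt ℝ (iteratedFDeriv ℝ n f) x :=
      hf.contDiffAt.differentiableAt_iteratedFDeriv (by norm_cast; exact n.lt_succ_self)
    rw [List.ofFn_succ, List.foldr_cons, ih _ (hf.of_le (by simp)),
      iteratedFDeriv_succ_apply_left, pder,
      fderiv_continuousMultilinear_apply_const_apply differentiableAt_iteratedFDeriv]
    rfl

theorem mderiv_eq_foldr_pder (s : Fin d → ℕ) (f : (Fin d → ℝ) → ℝ) :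
    mderiv s f = ((List.finRange d).flatMap fun i => List.replicate (s i) i).foldr pder f := by
  have foldr_replicate (i : Fin d) (g : (Fin d → ℝ) → ℝ) (a : ℕ) :
      (List.replicate a i).foldr pder g = (pder i)^[a] g := by
    induction a with
    | zero => rfl
    | succ a ih => rw [List.replicate_succ, List.foldr_cons, ih, Function.iterate_succ_apply']
  simp only [List.foldr_flatMap, foldr_replicate, mderiv]

theorem flatMap_replicate_count_perm (l : List (Fin d)) :
    ((List.finRange d).flatMap fun i => List.replicate (l.count i) i).Perm l := by
  refine List.perm_iff_count.2 fun i => ?_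
  simp [List.count_flatMap, Function.comp_def, List.count_replicate, ← List.ofFn_eq_map,
    List.sum_ofFn]

theorem iteratedFDeriv_apply_single_eq_mderiv (q : Fin n → Fin d) (hf : ContDiff ℝ n f) :
    (fun x => iteratedFDeriv ℝ n f x fun j => Pi.single (q j) 1) =
      mderiv (fun i => (List.ofFn q).count i) f := by
  rw [← foldr_pder_ofFn q hf, mderiv_eq_foldr_pder]
  exact foldr_pder_eq_of_perm (flatMap_replicate_count_perm _).symm (by simpa using hf)

theorem sum_count_ofFn (q : Fin n → Fin d) : ∑ i, (List.ofFn q).count i = n := by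
  simpa using Multiset.sum_count_eq_card (s := univ) (m := (List.ofFn q : Multiset (Fin d)))
    fun i _ => mem_univ i

end PartialDerivatives

section Holder

theorem holderWith_of_dist_le {X Y : Type*} [PseudoMetricSpace X] [PseudoMetricSpace Y]
    {C r : ℝ≥0} {f : X → Y} (h : ∀ x y, dist (f x) (f y) ≤ C * dist x y ^ (r : ℝ)) :
    HolderWith C r f := by
  intro x y
  rw [edist_nndist, edist_nndist, ← ENNReal.coe_rpow_of_nonneg _ r.coe_nonneg]
  exact_mod_cast h x y

theorem norm_le_sum_norm_apply_single {ι 𝕜 F : Type*} [Fintype ι] [DecidableEq ι]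
    [NontriviallyNormedField 𝕜] [NormedAddCommGroup F] [NormedSpace 𝕜 F] {k : ℕ}
    (A : ContinuousMultilinearMap 𝕜 (fun _ : Fin k => ι → 𝕜) F) :
    ‖A‖ ≤ ∑ q : Fin k → ι, ‖A fun j => Pi.single (q j) 1‖ := by
  refine A.opNorm_le_bound (by positivity) fun v => ?_
  have expand := multilinear_apply_eq_sum_single A.toMultilinearMap v
  simp only [ContinuousMultilinearMap.coe_coe] at expand
  rw [expand, sum_mul]
  refine norm_sum_le_of_le _ fun q _ => ?_
  rw [norm_smul, norm_prod, mul_comm]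
  gcongr
  exact norm_le_pi_norm _ _

theorem l2norm_le_sqrt_mul_norm {d : ℕ} (x : Fin d → ℝ) : l2norm x ≤ √d * ‖x‖ := by
  have sum_sq_le : ∑ i, x i ^ 2 ≤ d * ‖x‖ ^ 2 := by
    suffices ∀ i ∈ univ, x i ^ 2 ≤ ‖x‖ ^ 2 by simpa using sum_le_card_nsmul _ _ _ this
    intro i _
    rw [← sq_abs, ← Real.norm_eq_abs]
    gcongr
    exact norm_le_pi_norm x i
  rw [← Real.sqrt_sq (norm_nonneg x), ← Real.sqrt_mul d.cast_nonneg]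
  exact Real.sqrt_le_sqrt sum_sq_le

variable {d ℓ : ℕ} {L : ℝ} {γ : ℝ≥0} {f g : (Fin d → ℝ) → ℝ}

/-- The regularity part of `HolderClass`, without the support condition: all partial derivatives
of order `ℓ` are `γ`-Hölder with constant `L` in the Euclidean norm. -/
def HasHolderPartials (ℓ : ℕ) (γ L : ℝ) (f : (Fin d → ℝ) → ℝ) : Prop :=
  ContDiff ℝ ℓ f ∧ ∀ s : Fin d → ℕ, ∑ i, s i = ℓ → ∀ x y,
    |mderiv s f x - mderiv s f y| ≤ L * l2norm (x - y) ^ γ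

/-- A Hölder constant, in the sup norm of `Fin d → ℝ` and the operator norm, of the `ℓ`-th total
derivative of a function satisfying `HasHolderPartials ℓ γ L`. -/
noncomputable def iteratedFDerivHolderConst (d ℓ : ℕ) (γ : ℝ≥0) (L : ℝ) : ℝ≥0 :=
  d ^ ℓ * (L.toNNReal * NNReal.sqrt d ^ (γ : ℝ))

theorem HasHolderPartials.holderWith_iteratedFDeriv (hf : HasHolderPartials ℓ γ L f) :
    HolderWith (iteratedFDerivHolderConst d ℓ γ L) γ (iteratedFDeriv ℝ ℓ f) := by
  refine holderWith_of_dist_le fun x y => ?_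
  have entry_le (q : Fin ℓ → Fin d) :
      ‖(iteratedFDeriv ℝ ℓ f x - iteratedFDeriv ℝ ℓ f y) fun j => Pi.single (q j) 1‖ ≤
        L.toNNReal * (√d * ‖x - y‖) ^ (γ : ℝ) := by
    have entry_eq := congrFun (iteratedFDeriv_apply_single_eq_mderiv q hf.1)
    rw [sub_apply, entry_eq x, entry_eq y, Real.norm_eq_abs]
    refine (hf.2 _ (sum_count_ofFn q) x y).trans ?_
    gcongr
    · exact Real.rpow_nonneg (Real.sqrt_nonneg _) _
    · exact L.le_coe_toNNReal
    · exact Real.sqrt_nonneg _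
    · exact l2norm_le_sqrt_mul_norm _
  calc dist (iteratedFDeriv ℝ ℓ f x) (iteratedFDeriv ℝ ℓ f y)
      ≤ ∑ q : Fin ℓ → Fin d,
          ‖(iteratedFDeriv ℝ ℓ f x - iteratedFDeriv ℝ ℓ f y) fun j => Pi.single (q j) 1‖ := by
        rw [dist_eq_norm]
        exact norm_le_sum_norm_apply_single _
    _ ≤ ∑ _q : Fin ℓ → Fin d, L.toNNReal * (√d * ‖x - y‖) ^ (γ : ℝ) :=
        sum_le_sum fun q _ => entry_le q
    _ = iteratedFDerivHolderConst d ℓ γ L * dist x y ^ (γ : ℝ) := by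
        rw [Real.mul_rpow (Real.sqrt_nonneg _) (norm_nonneg _), dist_eq_norm]
        simp [iteratedFDerivHolderConst, mul_assoc]

theorem HasHolderPartials.holderWith_iteratedFDeriv_sub (hf : HasHolderPartials ℓ γ L f)
    (hg : HasHolderPartials ℓ γ L g) :
    HolderWith (2 * iteratedFDerivHolderConst d ℓ γ L) γ (iteratedFDeriv ℝ ℓ (f - g)) := by
  have holderWith_sub :=
    hf.holderWith_iteratedFDeriv.add (hg.holderWith_iteratedFDeriv.smul (-1 : ℝ))
  rwa [nnnorm_neg, nnnorm_one, mul_one, ← two_mul, neg_one_smul, ← sub_eq_add_neg,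
    ← iteratedFDeriv_sub hf.1 hg.1] at holderWith_sub

end Holder

section Cube

variable {d m : ℕ}

theorem exists_lt_nat_mul_sub_mem_Icc (hm : 0 < m) {t : ℝ} (ht : t ∈ Set.Icc (0 : ℝ) 1) :
    ∃ j < m, m * t - j ∈ Set.Icc (0 : ℝ) 1 := by
  have mt_nonneg : 0 ≤ m * t := mul_nonneg m.cast_nonneg ht.1
  rcases ht.2.lt_or_eq with t_lt_one | rfl
  · refine ⟨⌊m * t⌋₊, ?_, sub_nonneg.2 (Nat.floor_le mt_nonneg), ?_⟩
    · rw [Nat.floor_lt mt_nonneg]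
      exact mul_lt_of_lt_one_right (mod_cast hm) t_lt_one
    · exact (sub_lt_iff_lt_add'.2 (Nat.lt_floor_add_one _)).le
  · refine ⟨m - 1, Nat.sub_lt hm one_pos, ?_⟩
    rw [Nat.cast_pred hm]
    simp

theorem exists_smul_add_eq_of_mem_Icc (hm : 0 < m) {y : Fin d → ℝ} (hy : y ∈ Set.Icc 0 1) :
    ∃ j : Fin d → ℕ, (∀ i, j i < m) ∧ ∃ u ∈ Set.Icc (0 : Fin d → ℝ) 1,
      y = (m : ℝ)⁻¹ • (fun i => (j i : ℝ)) + (m : ℝ)⁻¹ • u := by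
  choose j hj hu using fun i => exists_lt_nat_mul_sub_mem_Icc hm ⟨hy.1 i, hy.2 i⟩
  refine ⟨j, hj, fun i => m * y i - j i, ⟨fun i => (hu i).1, fun i => (hu i).2⟩, ?_⟩
  ext i
  simp only [Pi.add_apply, Pi.smul_apply, smul_eq_mul]
  field_simp
  ring

end Cube

theorem lflr_le {β : ℝ} (hβ : 0 ≤ β) : (lflr β : ℝ) ≤ β := by
  rcases hβ.eq_or_lt with rfl | β_pos
  · simp [lflr]
  · have ceil_lt := Nat.ceil_lt_add_one hβ
    rw [lflr, Nat.cast_pred (Nat.ceil_pos.2 β_pos)]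
    linarith

theorem stmt16_general (d ℓ : ℕ) {β : ℝ} (hβ : ℓ ≤ β) (L : ℝ) :
    ∃ c : ℝ, 0 < c ∧ ∀ m : ℕ, 0 < m → ∀ h : ℝ, h = 1 / (m : ℝ) →
      ∀ f g : (Fin d → ℝ) → ℝ, HasHolderPartials ℓ (β - ℓ) L f →
        HasHolderPartials ℓ (β - ℓ) L g →
        (∀ j : Fin d → ℕ, (∀ i, j i < m) → ∀ x ∈ principalLattice d ℓ,
          |f (fun i => h * (x i + (j i : ℝ))) - g (fun i => h * (x i + (j i : ℝ)))|
            ≤ h ^ β) →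
        ∀ y ∈ Set.Icc (0 : Fin d → ℝ) 1, |f y - g y| ≤ c * h ^ β := by
  lift β - ℓ to ℝ≥0 using sub_nonneg.2 hβ with γ hγ
  obtain rfl : β = ℓ + γ := by rw [hγ, add_sub_cancel]
  set Λ := latticeLebesgueConst (Fin d) ℓ
  set C := 2 * iteratedFDerivHolderConst d ℓ γ L
  have Λ_nonneg : 0 ≤ Λ := latticeLebesgueConst_nonneg
  refine ⟨Λ + (Λ + 1) * C + 1, by positivity, ?_⟩
  rintro m hm h rfl f g hf hg hlattice y hy
  rw [one_div] at hlattice ⊢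
  obtain ⟨j, hj, u, hu, rfl⟩ := exists_smul_add_eq_of_mem_Icc hm hy
  set x : Fin d → ℝ := (m : ℝ)⁻¹ • fun i => (j i : ℝ)
  have lattice_le : ∀ v ∈ principalLattice d ℓ,
      ‖(f - g) (x + (m : ℝ)⁻¹ • v)‖ ≤ (m : ℝ)⁻¹ ^ (ℓ + γ : ℝ) := fun v hv => by
    rw [← smul_add, add_comm]
    exact hlattice j hj v hv
  calc |f _ - g _| ≤ Λ * (m : ℝ)⁻¹ ^ (ℓ + γ : ℝ) + (Λ + 1) * (C * (m : ℝ)⁻¹ ^ (ℓ + γ : ℝ)) :=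
        norm_le_of_forall_principalLattice (hf.1.sub hg.1)
          (hf.holderWith_iteratedFDeriv_sub hg) (by positivity) lattice_le hu
    _ = (Λ + (Λ + 1) * C) * (m : ℝ)⁻¹ ^ (ℓ + γ : ℝ) := by ring
    _ ≤ (Λ + (Λ + 1) * C + 1) * (m : ℝ)⁻¹ ^ (ℓ + γ : ℝ) :=
        mul_le_mul_of_nonneg_right (lt_add_one _).le (by positivity)

/-- If two functions in `H(β, L)` are `h^β`-close at every point of
every rescaled-and-shifted copy `P_ℓ^j = h(P_ℓ + j)` of the `ℓ`-th principal lattice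
(for the partition of `[0,1]^d` into sub-cubes of side `h = 1/m`), then they are
`c h^β`-close uniformly on the unit cube, for a constant `c = c(β, d, L)`. -/
theorem stmt16 (d : ℕ) (hd : 1 ≤ d) (β L : ℝ) (hβ : 1 < β) (hL : 0 < L)
    (ℓ : ℕ) (hℓ : ℓ = lflr β) :
    ∃ c : ℝ, 0 < c ∧ ∀ m : ℕ, 0 < m → ∀ h : ℝ, h = 1 / (m : ℝ) →
      ∀ f g : (Fin d → ℝ) → ℝ, HolderClass d β L f → HolderClass d β L g →
        (∀ j : Fin d → ℕ, (∀ i, j i < m) → ∀ x ∈ principalLattice d ℓ,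
          |f (fun i => h * (x i + (j i : ℝ))) - g (fun i => h * (x i + (j i : ℝ)))|
            ≤ h ^ β) →
        ∀ y ∈ Set.Icc (0 : Fin d → ℝ) 1, |f y - g y| ≤ c * h ^ β := by
  subst hℓ
  obtain ⟨c, c_pos, hc⟩ := stmt16_general d _ (lflr_le (zero_le_one.trans hβ.le)) L
  exact ⟨c, c_pos, fun m hm h hh f g hf hg => hc m hm h hh f g hf.2 hg.2⟩
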